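/- Let E be a separable Banach space and let μ be a centered Gaussian measure on E, i.e. the law of a random element Z of E such that L(Z) is a centered real Gaussian random variable for every continuous linear functional L on E. Then for every Borel set C ⊆ E that is convex and symmetric (C = −C), and every f ∈ E, one has μ(f + C) ≤ μ(C), where f + C = {f + g : g ∈ C}. -/

import Mathlib

/-!
Gaussian measures are log-concave: `μ K ^ a * μ L ^ b ≤ μ (a • K + b • L)` whenever `a + b = 1`.
With `a = b = 1 / 2`, applied to a compact `K ⊆ f + C` and to `L = -K`, which has the same measure,
this bounds `μ K` by the measure of `(f + C) / 2 + (-f + C) / 2 ⊆ C`.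

On `ℝ`, slicing functions into superlevel sets turns the Brunn–Minkowski inequality into the
Prékopa–Leindler inequality. The latter passes to products, affine images and log-concave
densities, hence to Gaussian measures in finite dimension. It extends to infinite dimension because
disjoint compact sets are separated by finitely many functionals, so that the measure of a compact
set `M` is the infimum of the measures of the cylinders `T ⁻¹' (T '' M)`.
-/

open MeasureTheory ProbabilityTheory
open Set
open scoped ENNReal

section Layercake

variable {α : Type*} [MeasurableSpace α] (μ : Measure α)

lemma lintegral_eq_lintegral_meas_ofReal_lt {f : α → ℝ≥0∞} (hf : AEMeasurable f μ)
    (hf_top : ∀ x, f x ≠ ∞) :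
    ∫⁻ x, f x ∂μ = ∫⁻ t in Ioi (0 : ℝ), μ {x | ENNReal.ofReal t < f x} := by
  calc ∫⁻ x, f x ∂μ
      = ∫⁻ x, ENNReal.ofReal (f x).toReal ∂μ := by simp only [ENNReal.ofReal_toReal (hf_top _)]
    _ = ∫⁻ t in Ioi (0 : ℝ), μ {x | t < (f x).toReal} :=
        lintegral_eq_lintegral_meas_lt μ (ae_of_all _ fun _ ↦ ENNReal.toReal_nonneg)
          hf.ennreal_toReal
    _ = ∫⁻ t in Ioi (0 : ℝ), μ {x | ENNReal.ofReal t < f x} := by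
        refine setLIntegral_congr_fun measurableSet_Ioi fun t ht ↦ ?_
        simp only [ENNReal.ofReal_lt_iff_lt_toReal (le_of_lt ht) (hf_top _)]

lemma measurable_meas_ofReal_lt (f : α → ℝ≥0∞) :
    Measurable fun t : ℝ ↦ μ {x | ENNReal.ofReal t < f x} :=
  Antitone.measurable fun _ _ hst ↦
    measure_mono fun _ hx ↦ (ENNReal.ofReal_le_ofReal hst).trans_lt hx

lemma lintegral_eq_iSup_lintegral_min_natCast {f : α → ℝ≥0∞} (hf : Measurable f) :
    ∫⁻ x, f x ∂μ = ⨆ n : ℕ, ∫⁻ x, min (f x) n ∂μ := by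
  rw [← lintegral_iSup (fun n ↦ hf.min measurable_const)
    fun m n hmn x ↦ min_le_min_left _ (Nat.cast_le.2 hmn)]
  simp only [← inf_iSup_eq, ENNReal.iSup_natCast, inf_top_eq]

end Layercake

section ENNReal

lemma ennreal_geom_mean_le_arith_mean2_weighted (x y : ℝ≥0∞) {a b : ℝ} (ha : 0 < a) (hb : 0 < b)
    (hab : a + b = 1) :
    x ^ a * y ^ b ≤ ENNReal.ofReal a * x + ENNReal.ofReal b * y := by
  have h := ENNReal.young_inequality (x ^ a) (y ^ b) (Real.HolderConjugate.inv_inv ha hb hab)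
  simpa only [ENNReal.rpow_rpow_inv ha.ne', ENNReal.rpow_rpow_inv hb.ne',
    ENNReal.ofReal_inv_of_pos ha, ENNReal.ofReal_inv_of_pos hb, ENNReal.div_eq_inv_mul,
    inv_inv] using h

lemma ennreal_iSup_rpow {ι : Sort*} (u : ι → ℝ≥0∞) {a : ℝ} (ha : 0 < a) :
    (⨆ i, u i) ^ a = ⨆ i, u i ^ a :=
  (ENNReal.orderIsoRpow a ha).map_iSup u

end ENNReal

section RealLine

open scoped Pointwise

lemma volume_add_volume_le_of_isGreatest_of_isLeast {A B : Set ℝ} {a b : ℝ}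
    (hA : IsGreatest A a) (hB : IsLeast B b) (hB_meas : MeasurableSet B) :
    volume A + volume B ≤ volume (A + B) := by
  have h_meet : (b +ᵥ A) ∩ (a +ᵥ B) ⊆ {a + b} := by
    rintro _ ⟨⟨x, hx, rfl⟩, ⟨y, hy, hxy⟩⟩
    have hxa : x ≤ a := hA.2 hx
    have hby : b ≤ y := hB.2 hy
    simp only [vadd_eq_add, mem_singleton_iff] at hxy ⊢
    linarith
  have h_disj : AEDisjoint volume (b +ᵥ A) (a +ᵥ B) :=
    measure_mono_null h_meet (measure_singleton _)
  have h_sub : (b +ᵥ A) ∪ (a +ᵥ B) ⊆ A + B := by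
    rintro _ (⟨x, hx, rfl⟩ | ⟨y, hy, rfl⟩)
    · exact ⟨x, hx, b, hB.1, add_comm x b⟩
    · exact ⟨a, hA.1, y, hy, rfl⟩
  calc volume A + volume B
      = volume (b +ᵥ A) + volume (a +ᵥ B) := by simp only [measure_vadd]
    _ = volume ((b +ᵥ A) ∪ (a +ᵥ B)) :=
        (measure_union₀ (hB_meas.const_vadd a).nullMeasurableSet h_disj).symm
    _ ≤ volume (A + B) := measure_mono h_sub

lemma volume_add_volume_le_volume_add {A B : Set ℝ} (hA : MeasurableSet A)
    (hB : MeasurableSet B) (hA_ne : A.Nonempty) (hB_ne : B.Nonempty) :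
    volume A + volume B ≤ volume (A + B) := by
  obtain ⟨p, hp⟩ := hA_ne
  obtain ⟨q, hq⟩ := hB_ne
  rw [hA.measure_eq_iSup_isCompact, hB.measure_eq_iSup_isCompact]
  simp only [iSup_and']
  refine ENNReal.biSup_add_biSup_le' ⟨∅, by simp⟩ ⟨∅, by simp⟩ ?_
  rintro K ⟨hKA, hK⟩ L ⟨hLB, hL⟩
  have hL' := hL.insert q
  calc volume K + volume L
      ≤ volume (insert p K) + volume (insert q L) := by gcongr <;> exact subset_insert _ _
    _ ≤ volume (insert p K + insert q L) :=
        volume_add_volume_le_of_isGreatest_of_isLeast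
          ((hK.insert p).isGreatest_sSup (insert_nonempty p K))
          (hL'.isLeast_sInf (insert_nonempty q L)) hL'.measurableSet
    _ ≤ volume (A + B) := by
        gcongr
        exacts [insert_subset hp hKA, insert_subset hq hLB]

lemma ofReal_abs_mul_volume_add_le_volume_smul_add_smul {A B : Set ℝ} (hA : MeasurableSet A)
    (hB : MeasurableSet B) (hA_ne : A.Nonempty) (hB_ne : B.Nonempty) (a b : ℝ) :
    ENNReal.ofReal |a| * volume A + ENNReal.ofReal |b| * volume B ≤ volume (a • A + b • B) := by
  have h := volume_add_volume_le_volume_add (hA.const_smul₀ a) (hB.const_smul₀ b)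
    (hA_ne.smul_set (a := a)) (hB_ne.smul_set (a := b))
  simpa only [Measure.addHaar_smul, Module.finrank_self, pow_one] using h

variable {a b : ℝ} {f g h : ℝ → ℝ≥0∞}

lemma weighted_volume_superlevel_add_le (ha : 0 < a) (hb : 0 < b) (hab : a + b = 1)
    (hf : Measurable f) (hg : Measurable g)
    (hfgh : ∀ x y, f x ^ a * g y ^ b ≤ h (a • x + b • y)) {t : ℝ≥0∞}
    (hf_ne : {x | t < f x}.Nonempty) (hg_ne : {x | t < g x}.Nonempty) :
    ENNReal.ofReal a * volume {x | t < f x} + ENNReal.ofReal b * volume {x | t < g x} ≤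
      volume {x | t < h x} := by
  have h_sub : a • {x | t < f x} + b • {x | t < g x} ⊆ {x | t < h x} := by
    rintro _ ⟨_, ⟨x, hx, rfl⟩, _, ⟨y, hy, rfl⟩, rfl⟩
    calc t = t ^ a * t ^ b := by
          rw [← ENNReal.rpow_add_of_nonneg a b ha.le hb.le, hab, ENNReal.rpow_one]
      _ < f x ^ a * g y ^ b :=
        ENNReal.mul_lt_mul (ENNReal.rpow_lt_rpow hx ha) (ENNReal.rpow_lt_rpow hy hb)
      _ ≤ h (a • x + b • y) := hfgh x y
  have h_vol := ofReal_abs_mul_volume_add_le_volume_smul_add_smul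
    (measurableSet_lt measurable_const hf) (measurableSet_lt measurable_const hg) hf_ne hg_ne a b
  rw [abs_of_pos ha, abs_of_pos hb] at h_vol
  exact h_vol.trans (measure_mono h_sub)

lemma weighted_lintegral_add_le_of_iSup_eq_one (ha : 0 < a) (hb : 0 < b) (hab : a + b = 1)
    (hf : Measurable f) (hg : Measurable g) (hh : Measurable h)
    (hf_sup : ⨆ x, f x = 1) (hg_sup : ⨆ x, g x = 1)
    (hfgh : ∀ x y, f x ^ a * g y ^ b ≤ h (a • x + b • y)) :
    ENNReal.ofReal a * (∫⁻ x, f x) + ENNReal.ofReal b * (∫⁻ x, g x) ≤ ∫⁻ x, h x := by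
  have hf_le (x) : f x ≤ 1 := hf_sup ▸ le_iSup f x
  have hg_le (x) : g x ≤ 1 := hg_sup ▸ le_iSup g x
  have h_level (t : ℝ) :
      ENNReal.ofReal a * volume {x | ENNReal.ofReal t < f x} +
          ENNReal.ofReal b * volume {x | ENNReal.ofReal t < g x} ≤
        volume {x | ENNReal.ofReal t < min (h x) 1} := by
    rcases lt_or_ge (ENNReal.ofReal t) 1 with ht | ht
    · simp only [lt_min_iff, ht, and_true]
      exact weighted_volume_superlevel_add_le ha hb hab hf hg hfgh
        (lt_iSup_iff.1 (ht.trans_eq hf_sup.symm)) (lt_iSup_iff.1 (ht.trans_eq hg_sup.symm))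
    · simp [fun x ↦ ((hf_le x).trans ht).not_gt, fun x ↦ ((hg_le x).trans ht).not_gt]
  have h_layer {k : ℝ → ℝ≥0∞} (hk : Measurable k) (hk_le : ∀ x, k x ≤ 1) :
      ∫⁻ x, k x = ∫⁻ t in Ioi (0 : ℝ), volume {x | ENNReal.ofReal t < k x} :=
    lintegral_eq_lintegral_meas_ofReal_lt _ hk.aemeasurable
      fun x ↦ ne_top_of_le_ne_top ENNReal.one_ne_top (hk_le x)
  calc ENNReal.ofReal a * (∫⁻ x, f x) + ENNReal.ofReal b * (∫⁻ x, g x)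
      = ∫⁻ t in Ioi (0 : ℝ), (ENNReal.ofReal a * volume {x | ENNReal.ofReal t < f x} +
          ENNReal.ofReal b * volume {x | ENNReal.ofReal t < g x}) := by
        rw [lintegral_add_left ((measurable_meas_ofReal_lt _ f).const_mul _),
          lintegral_const_mul _ (measurable_meas_ofReal_lt _ f),
          lintegral_const_mul _ (measurable_meas_ofReal_lt _ g), h_layer hf hf_le, h_layer hg hg_le]
    _ ≤ ∫⁻ t in Ioi (0 : ℝ), volume {x | ENNReal.ofReal t < min (h x) 1} := lintegral_mono h_level
    _ = ∫⁻ x, min (h x) 1 := (h_layer (hh.min measurable_const) fun x ↦ min_le_right _ _).symm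
    _ ≤ ∫⁻ x, h x := lintegral_mono fun x ↦ min_le_left _ _

lemma lintegral_rpow_mul_le_of_iSup_ne_top (ha : 0 < a) (hb : 0 < b) (hab : a + b = 1)
    (hf : Measurable f) (hg : Measurable g) (hh : Measurable h)
    (hf_sup : ⨆ x, f x ≠ ∞) (hg_sup : ⨆ x, g x ≠ ∞)
    (hfgh : ∀ x y, f x ^ a * g y ^ b ≤ h (a • x + b • y)) :
    (∫⁻ x, f x) ^ a * (∫⁻ x, g x) ^ b ≤ ∫⁻ x, h x := by
  set A := ⨆ x, f x
  set B := ⨆ x, g x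
  rcases eq_or_ne A 0 with hA0 | hA0
  · simp [ENNReal.iSup_eq_zero.1 hA0, ha]
  rcases eq_or_ne B 0 with hB0 | hB0
  · simp [ENNReal.iSup_eq_zero.1 hB0, hb]
  have h_scale (c : ℝ≥0∞) (hc0 : c ≠ 0) (hc : c ≠ ∞) {k : ℝ → ℝ≥0∞} (hk : Measurable k) :
      ∫⁻ x, k x = c * ∫⁻ x, c⁻¹ * k x := by
    rw [lintegral_const_mul _ hk, ENNReal.mul_inv_cancel_left hc0 hc]
  have hAa : A ^ a ≠ ∞ := by finiteness
  have hBb : B ^ b ≠ ∞ := by finiteness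
  set C := A ^ a * B ^ b with hC
  have hC0 : C ≠ 0 := by positivity
  have hC_top : C ≠ ∞ := by finiteness
  have h_normalized := weighted_lintegral_add_le_of_iSup_eq_one ha hb hab
    (hf.const_mul A⁻¹) (hg.const_mul B⁻¹) (hh.const_mul C⁻¹)
    (by rw [← ENNReal.mul_iSup, ENNReal.inv_mul_cancel hA0 hf_sup])
    (by rw [← ENNReal.mul_iSup, ENNReal.inv_mul_cancel hB0 hg_sup])
    (fun x y ↦ by
      rw [ENNReal.mul_rpow_of_nonneg _ _ ha.le, ENNReal.mul_rpow_of_nonneg _ _ hb.le,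
        mul_mul_mul_comm, ENNReal.inv_rpow, ENNReal.inv_rpow, hC,
        ENNReal.mul_inv (.inr hBb) (.inl hAa)]
      gcongr
      exact hfgh x y)
  calc (∫⁻ x, f x) ^ a * (∫⁻ x, g x) ^ b
      = C * ((∫⁻ x, A⁻¹ * f x) ^ a * (∫⁻ x, B⁻¹ * g x) ^ b) := by
        rw [h_scale A hA0 hf_sup hf, h_scale B hB0 hg_sup hg,
          ENNReal.mul_rpow_of_nonneg _ _ ha.le, ENNReal.mul_rpow_of_nonneg _ _ hb.le,
          mul_mul_mul_comm]
    _ ≤ C * ∫⁻ x, C⁻¹ * h x := by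
        gcongr
        exact (ennreal_geom_mean_le_arith_mean2_weighted _ _ ha hb hab).trans h_normalized
    _ = ∫⁻ x, h x := (h_scale C hC0 hC_top hh).symm

end RealLine

section PrekopaLeindler

open scoped Pointwise

/-- The Prékopa–Leindler property of a measure `μ`: the functional form of log-concavity, which,
unlike the inequality `μ A ^ a * μ B ^ b ≤ μ (a • A + b • B)` between sets, passes to products. -/
def SatisfiesPrekopaLeindler {X : Type*} [AddCommGroup X] [Module ℝ X] [MeasurableSpace X]
    (μ : Measure X) : Prop :=
  ∀ ⦃a b : ℝ⦄, 0 < a → 0 < b → a + b = 1 → ∀ ⦃f g h : X → ℝ≥0∞⦄,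
    Measurable f → Measurable g → Measurable h →
    (∀ x y, f x ^ a * g y ^ b ≤ h (a • x + b • y)) →
    (∫⁻ x, f x ∂μ) ^ a * (∫⁻ x, g x ∂μ) ^ b ≤ ∫⁻ x, h x ∂μ

variable {X Y : Type*} [AddCommGroup X] [Module ℝ X] [MeasurableSpace X]
  [AddCommGroup Y] [Module ℝ Y] [MeasurableSpace Y] {μ : Measure X} {ν : Measure Y}

namespace SatisfiesPrekopaLeindler

lemma dirac (x : X) : SatisfiesPrekopaLeindler (Measure.dirac x) := by
  intro a b _ _ hab f g h hf hg hh hfgh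
  simpa only [lintegral_dirac' x hf, lintegral_dirac' x hg, lintegral_dirac' x hh,
    Convex.combo_self hab] using hfgh x x

lemma map (hμ : SatisfiesPrekopaLeindler μ) (T : X →ᵃ[ℝ] Y) (hT : Measurable T) :
    SatisfiesPrekopaLeindler (μ.map T) := by
  intro a b ha hb hab f g h hf hg hh hfgh
  rw [lintegral_map hf hT, lintegral_map hg hT, lintegral_map hh hT]
  refine hμ ha hb hab (hf.comp hT) (hg.comp hT) (hh.comp hT) fun x y ↦ ?_
  simpa only [Function.comp_apply, Convex.combo_affine_apply hab] using hfgh (T x) (T y)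

lemma prod [SFinite ν] (hμ : SatisfiesPrekopaLeindler μ) (hν : SatisfiesPrekopaLeindler ν) :
    SatisfiesPrekopaLeindler (μ.prod ν) := by
  intro a b ha hb hab f g h hf hg hh hfgh
  rw [lintegral_prod _ hf.aemeasurable, lintegral_prod _ hg.aemeasurable,
    lintegral_prod _ hh.aemeasurable]
  exact hμ ha hb hab hf.lintegral_prod_right' hg.lintegral_prod_right' hh.lintegral_prod_right'
    fun x x' ↦ hν ha hb hab (by fun_prop) (by fun_prop) (by fun_prop)
      fun y y' ↦ hfgh (x, y) (x', y')

lemma pi {n : ℕ} {Z : Fin n → Type*} [∀ i, AddCommGroup (Z i)] [∀ i, Module ℝ (Z i)]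
    [∀ i, MeasurableSpace (Z i)] {μ : ∀ i, Measure (Z i)} [∀ i, SigmaFinite (μ i)]
    (hμ : ∀ i, SatisfiesPrekopaLeindler (μ i)) : SatisfiesPrekopaLeindler (Measure.pi μ) := by
  induction n with
  | zero =>
    rw [Measure.pi_of_empty]
    exact dirac _
  | succ n ih =>
    let cons := (Fin.consLinearEquiv ℝ Z).toLinearMap.toAffineMap
    have h_cons : ⇑(MeasurableEquiv.piFinSuccAbove Z 0).symm = cons :=
      funext fun _ ↦ Fin.insertNth_zero _ _
    have h_split := (measurePreserving_piFinSuccAbove μ 0).symm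
    rw [← h_split.map_eq, h_cons]
    exact ((hμ 0).prod (ih fun i ↦ hμ _)).map cons (h_cons ▸ h_split.measurable)

lemma withDensity (hμ : SatisfiesPrekopaLeindler μ) {ρ : X → ℝ≥0∞} (hρ : Measurable ρ)
    (hρ_concave : ∀ ⦃a b : ℝ⦄, 0 < a → 0 < b → a + b = 1 →
      ∀ x y, ρ x ^ a * ρ y ^ b ≤ ρ (a • x + b • y)) :
    SatisfiesPrekopaLeindler (μ.withDensity ρ) := by
  intro a b ha hb hab f g h hf hg hh hfgh
  simp only [lintegral_withDensity_eq_lintegral_mul _ hρ hf,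
    lintegral_withDensity_eq_lintegral_mul _ hρ hg, lintegral_withDensity_eq_lintegral_mul _ hρ hh]
  refine hμ ha hb hab (hρ.mul hf) (hρ.mul hg) (hρ.mul hh) fun x y ↦ ?_
  simp only [Pi.mul_apply, ENNReal.mul_rpow_of_nonneg _ _ ha.le,
    ENNReal.mul_rpow_of_nonneg _ _ hb.le]
  rw [mul_mul_mul_comm]
  exact mul_le_mul' (hρ_concave ha hb hab x y) (hfgh x y)

lemma measure_rpow_mul_measure_rpow_le (hμ : SatisfiesPrekopaLeindler μ) {a b : ℝ} (ha : 0 < a)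
    (hb : 0 < b) (hab : a + b = 1) {A B : Set X} (hA : MeasurableSet A) (hB : MeasurableSet B) :
    μ A ^ a * μ B ^ b ≤ μ (a • A + b • B) := by
  set D := toMeasurable μ (a • A + b • B)
  have hD : MeasurableSet D := measurableSet_toMeasurable _ _
  have h_indicator (x y) : A.indicator 1 x ^ a * B.indicator 1 y ^ b ≤
      D.indicator (1 : X → ℝ≥0∞) (a • x + b • y) := by
    by_cases hx : x ∈ A
    · by_cases hy : y ∈ B
      · have hxy : a • x + b • y ∈ D :=
          subset_toMeasurable _ _ (add_mem_add (smul_mem_smul_set hx) (smul_mem_smul_set hy))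
        simp [hx, hy, hxy]
      · simp [hy, hb]
    · simp [hx, ha]
  have h_int := hμ ha hb hab (measurable_one.indicator hA) (measurable_one.indicator hB)
    (measurable_one.indicator hD) h_indicator
  rwa [lintegral_indicator_one hA, lintegral_indicator_one hB, lintegral_indicator_one hD,
    measure_toMeasurable] at h_int

end SatisfiesPrekopaLeindler

lemma satisfiesPrekopaLeindler_volume_real : SatisfiesPrekopaLeindler (volume : Measure ℝ) := by
  intro a b ha hb hab f g h hf hg hh hfgh
  have h_sup (k : ℝ → ℝ≥0∞) (n : ℕ) : ⨆ x, min (k x) n ≠ ∞ :=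
    ne_top_of_le_ne_top (ENNReal.natCast_ne_top n) (iSup_le fun _ ↦ min_le_right _ _)
  rw [lintegral_eq_iSup_lintegral_min_natCast _ hf, lintegral_eq_iSup_lintegral_min_natCast _ hg,
    ennreal_iSup_rpow _ ha, ennreal_iSup_rpow _ hb]
  simp only [ENNReal.iSup_mul, ENNReal.mul_iSup]
  refine iSup₂_le fun m n ↦ lintegral_rpow_mul_le_of_iSup_ne_top ha hb hab
    (hf.min measurable_const) (hg.min measurable_const) hh (h_sup f _) (h_sup g _) fun x y ↦ ?_
  refine le_trans ?_ (hfgh x y)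
  gcongr <;> exact min_le_left _ _

end PrekopaLeindler

section Gaussian

lemma gaussianPDF_rpow_mul_rpow_le (m : ℝ) (v : NNReal) {a b : ℝ} (ha : 0 ≤ a) (hb : 0 ≤ b)
    (hab : a + b = 1) (x y : ℝ) :
    gaussianPDF m v x ^ a * gaussianPDF m v y ^ b ≤ gaussianPDF m v (a • x + b • y) := by
  have h_convex : (a * x + b * y - m) ^ 2 ≤ a * (x - m) ^ 2 + b * (y - m) ^ 2 := by
    obtain rfl : b = 1 - a := by linarith
    nlinarith [mul_nonneg (mul_nonneg ha hb) (sq_nonneg (x - y))]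
  set c := (√(2 * Real.pi * v))⁻¹
  have hc : 0 ≤ c := by positivity
  have h_pdf (z : ℝ) : gaussianPDF m v z = ENNReal.ofReal (c * Real.exp (-(z - m) ^ 2 / (2 * v))) :=
    rfl
  rw [h_pdf, h_pdf, h_pdf, ENNReal.ofReal_rpow_of_nonneg (by positivity) ha,
    ENNReal.ofReal_rpow_of_nonneg (by positivity) hb, ← ENNReal.ofReal_mul (by positivity)]
  refine ENNReal.ofReal_le_ofReal ?_
  calc (c * Real.exp (-(x - m) ^ 2 / (2 * v))) ^ a * (c * Real.exp (-(y - m) ^ 2 / (2 * v))) ^ b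
      = c * Real.exp (-(a * (x - m) ^ 2 + b * (y - m) ^ 2) / (2 * v)) := by
        rw [Real.mul_rpow hc (Real.exp_nonneg _), Real.mul_rpow hc (Real.exp_nonneg _),
          mul_mul_mul_comm, ← Real.rpow_add_of_nonneg hc ha hb, hab, Real.rpow_one,
          ← Real.exp_mul, ← Real.exp_mul, ← Real.exp_add]
        ring_nf
    _ ≤ c * Real.exp (-(a • x + b • y - m) ^ 2 / (2 * v)) := by
        simp only [smul_eq_mul]
        gcongr

lemma satisfiesPrekopaLeindler_gaussianReal (m : ℝ) (v : NNReal) :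
    SatisfiesPrekopaLeindler (gaussianReal m v) := by
  rcases eq_or_ne v 0 with rfl | hv
  · rw [gaussianReal_zero_var]
    exact .dirac m
  · rw [gaussianReal_of_var_ne_zero m hv]
    exact SatisfiesPrekopaLeindler.withDensity satisfiesPrekopaLeindler_volume_real
      (measurable_gaussianPDF m v) fun _ _ ha hb hab ↦
        gaussianPDF_rpow_mul_rpow_le m v ha.le hb.le hab

lemma satisfiesPrekopaLeindler_stdGaussian (E : Type*) [NormedAddCommGroup E]
    [InnerProductSpace ℝ E] [FiniteDimensional ℝ E] [MeasurableSpace E] [BorelSpace E] :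
    SatisfiesPrekopaLeindler (stdGaussian E) :=
  (SatisfiesPrekopaLeindler.pi fun _ ↦ satisfiesPrekopaLeindler_gaussianReal 0 1).map
    (Fintype.linearCombination ℝ (stdOrthonormalBasis ℝ E)).toAffineMap
    (by simpa [Fintype.linearCombination_apply] using by fun_prop)

open scoped MatrixOrder in
lemma satisfiesPrekopaLeindler_multivariateGaussian {ι : Type*} [Fintype ι] [DecidableEq ι]
    (m : EuclideanSpace ℝ ι) (S : Matrix ι ι ℝ) :
    SatisfiesPrekopaLeindler (multivariateGaussian m S) :=
  (satisfiesPrekopaLeindler_stdGaussian (EuclideanSpace ℝ ι)).map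
    (AffineMap.const ℝ (EuclideanSpace ℝ ι) m +
      (Matrix.toEuclideanCLM (𝕜 := ℝ) (CFC.sqrt S)).toLinearMap.toAffineMap)
    (by fun_prop : Measurable fun x ↦ m + Matrix.toEuclideanCLM (𝕜 := ℝ) (CFC.sqrt S) x)

lemma eq_multivariateGaussian {ι : Type*} [Fintype ι] [DecidableEq ι]
    (ν : Measure (EuclideanSpace ℝ ι)) [IsGaussian ν] :
    ν = multivariateGaussian ν[id] (LinearMap.BilinForm.toMatrix
      (EuclideanSpace.basisFun ι ℝ).toBasis (covarianceBilin ν).toBilinForm) := by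
  set e := (EuclideanSpace.basisFun ι ℝ).toBasis
  set B := (covarianceBilin ν).toBilinForm
  have h_posSemidef : (LinearMap.BilinForm.toMatrix e B).PosSemidef := by
    refine .of_dotProduct_mulVec_nonneg ?_ fun x ↦ ?_
    · ext i j
      simpa [B, LinearMap.BilinForm.toMatrix_apply] using covarianceBilin_comm (e j) (e i)
    · rw [star_trivial, LinearMap.BilinForm.dotProduct_toMatrix_mulVec]
      exact covarianceBilin_self_nonneg _
  refine IsGaussian.ext integral_id_multivariateGaussian'.symm ?_
  ext x y
  rw [covarianceBilin_multivariateGaussian h_posSemidef]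
  exact LinearMap.BilinForm.apply_eq_dotProduct_toMatrix_mulVec e B x y

lemma satisfiesPrekopaLeindler_of_isGaussian {ι : Type*} [Finite ι]
    (ν : Measure (EuclideanSpace ℝ ι)) [IsGaussian ν] : SatisfiesPrekopaLeindler ν := by
  classical
  have := Fintype.ofFinite ι
  rw [eq_multivariateGaussian ν]
  exact satisfiesPrekopaLeindler_multivariateGaussian _ _

end Gaussian

section Symmetry

lemma isNegInvariant_gaussianReal_zero (v : NNReal) : (gaussianReal 0 v).IsNegInvariant :=
  ⟨by rw [Measure.neg, gaussianReal_map_neg, neg_zero]⟩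

variable {F : Type*} [NormedAddCommGroup F] [NormedSpace ℝ F] [CompleteSpace F]
  [SecondCountableTopology F] [MeasurableSpace F] [BorelSpace F]

lemma isNegInvariant_of_forall_map_dual (ν : Measure F) [IsFiniteMeasure ν]
    (hν : ∀ L : F →L[ℝ] ℝ, (ν.map L).IsNegInvariant) : ν.IsNegInvariant := by
  have : IsFiniteMeasure ν.neg := Measure.isFiniteMeasure_map ν _
  refine ⟨Measure.ext_of_charFunDual (funext fun L ↦ ?_)⟩
  have h_map : ν.neg.map L = ν.map L :=
    calc ν.neg.map L = (ν.map L).neg := by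
          rw [Measure.neg, Measure.neg, Measure.map_map (by fun_prop) (by fun_prop),
            Measure.map_map (by fun_prop) (by fun_prop)]
          congr 1
          ext x
          simp
      _ = ν.map L := (hν L).neg_eq_self
  rw [charFunDual_eq_charFun_map_one, h_map, charFunDual_eq_charFun_map_one]

end Symmetry

section Cylinder

open scoped Pointwise

variable {E : Type*} [AddCommGroup E] [Module ℝ E] [TopologicalSpace E] [IsTopologicalAddGroup E]
  [SeparatingDual ℝ E]

lemma exists_disjoint_image_euclideanSpace {K M : Set E} (hK : IsCompact K) (hM : IsCompact M)
    (hKM : Disjoint K M) :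
    ∃ (n : ℕ) (T : E →L[ℝ] EuclideanSpace ℝ (Fin n)), Disjoint (T '' K) (T '' M) := by
  have h_ne : ∀ z ∈ K - M, z ≠ 0 := by
    rintro _ ⟨x, hx, y, hy, rfl⟩
    exact sub_ne_zero.2 (hKM.ne_of_mem hx hy)
  have h_compact : IsCompact (K - M) := sub_eq_add_neg K M ▸ hK.add hM.neg
  obtain ⟨s, hs⟩ := h_compact.elim_finite_subcover (fun L : E →L[ℝ] ℝ ↦ {z | L z ≠ 0})
    (fun L ↦ isOpen_ne_fun L.continuous continuous_const)
    fun z hz ↦ mem_iUnion.2 (SeparatingDual.exists_ne_zero (h_ne z hz))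
  let T : E →L[ℝ] EuclideanSpace ℝ (Fin s.card) :=
    (EuclideanSpace.equiv (Fin s.card) ℝ).symm.toContinuousLinearMap ∘L
      ContinuousLinearMap.pi fun i ↦ (s.equivFin.symm i : E →L[ℝ] ℝ)
  refine ⟨s.card, T, disjoint_image_image fun x hx y hy hxy ↦ ?_⟩
  obtain ⟨L, hL, hLxy⟩ := mem_iUnion₂.1 (hs (sub_mem_sub hx hy))
  refine hLxy ?_
  have h_coord := congrArg (· (s.equivFin ⟨L, hL⟩)) hxy
  simpa [T, sub_eq_zero] using h_coord

variable [MeasurableSpace E] [OpensMeasurableSpace E] {μ : Measure E} [IsFiniteMeasure μ]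
  [μ.InnerRegularCompactLTTop]

lemma measure_eq_iInf_measure_preimage_image {M : Set E} (hM : IsCompact M) :
    μ M = ⨅ (n : ℕ) (T : E →L[ℝ] EuclideanSpace ℝ (Fin n)), μ (T ⁻¹' (T '' M)) := by
  have : T2Space E := SeparatingDual.t2Space (R := ℝ)
  refine le_antisymm (le_iInf₂ fun n T ↦ measure_mono (subset_preimage_image T M)) ?_
  have h_add : (⨅ (n : ℕ) (T : E →L[ℝ] EuclideanSpace ℝ (Fin n)), μ (T ⁻¹' (T '' M))) + μ Mᶜ ≤
      μ M + μ Mᶜ := by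
    rw [measure_add_measure_compl hM.measurableSet,
      hM.measurableSet.compl.measure_eq_iSup_isCompact_of_ne_top (measure_ne_top _ _)]
    simp only [iSup_and']
    rw [ENNReal.add_biSup' ⟨∅, empty_subset _, isCompact_empty⟩]
    refine iSup₂_le fun Q ⟨hQM, hQ⟩ ↦ ?_
    obtain ⟨n, T, hT⟩ :=
      exists_disjoint_image_euclideanSpace hQ hM (disjoint_left.2 fun _ hx ↦ hQM hx)
    have h_disj : Disjoint (T ⁻¹' (T '' M)) Q :=
      (disjoint_image_left.1 hT).symm
    calc (⨅ (n : ℕ) (T : E →L[ℝ] EuclideanSpace ℝ (Fin n)), μ (T ⁻¹' (T '' M))) + μ Q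
        ≤ μ (T ⁻¹' (T '' M)) + μ Q := by
          gcongr
          exact (iInf_le _ n).trans (iInf_le _ T)
      _ = μ (T ⁻¹' (T '' M) ∪ Q) := (measure_union h_disj hQ.measurableSet).symm
      _ ≤ μ univ := measure_mono (subset_univ _)
  exact ENNReal.le_of_add_le_add_right (measure_ne_top _ _) h_add

lemma measure_neg_of_isCompact (hμ : ∀ L : E →L[ℝ] ℝ, (μ.map L).IsNegInvariant)
    {K : Set E} (hK : IsCompact K) : μ (-K) = μ K := by
  rw [measure_eq_iInf_measure_preimage_image hK, measure_eq_iInf_measure_preimage_image hK.neg]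
  refine iInf_congr fun n ↦ iInf_congr fun T ↦ ?_
  have hTK := (hK.image T.continuous).measurableSet
  have : (μ.map T).IsNegInvariant := isNegInvariant_of_forall_map_dual _ fun L ↦ by
    rw [Measure.map_map (by fun_prop) (by fun_prop)]
    exact hμ (L ∘L T)
  rw [image_neg, ← Measure.map_apply (by fun_prop) hTK,
    ← Measure.map_apply (by fun_prop) hTK.neg, Measure.measure_neg]

end Cylinder

section Anderson

open scoped Pointwise

lemma measure_rpow_mul_measure_rpow_le_of_isGaussian {E : Type*} [AddCommGroup E] [Module ℝ E]
    [TopologicalSpace E] [IsTopologicalAddGroup E] [ContinuousConstSMul ℝ E] [SeparatingDual ℝ E]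
    [MeasurableSpace E] [BorelSpace E] (μ : Measure E) [IsGaussian μ] [μ.InnerRegularCompactLTTop]
    {a b : ℝ} (ha : 0 < a) (hb : 0 < b) (hab : a + b = 1) {K L : Set E} (hK : IsCompact K)
    (hL : IsCompact L) :
    μ K ^ a * μ L ^ b ≤ μ (a • K + b • L) := by
  rw [measure_eq_iInf_measure_preimage_image ((hK.smul a).add (hL.smul b))]
  refine le_iInf₂ fun n T ↦ ?_
  have hTK := hK.image T.continuous
  have hTL := hL.image T.continuous
  have : IsGaussian (μ.map T) := isGaussian_map_of_measurable (by fun_prop)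
  calc μ K ^ a * μ L ^ b
      ≤ μ (T ⁻¹' (T '' K)) ^ a * μ (T ⁻¹' (T '' L)) ^ b := by
        gcongr <;> exact subset_preimage_image _ _
    _ = μ.map T (T '' K) ^ a * μ.map T (T '' L) ^ b := by
        rw [Measure.map_apply (by fun_prop) hTK.measurableSet,
          Measure.map_apply (by fun_prop) hTL.measurableSet]
    _ ≤ μ.map T (a • T '' K + b • T '' L) :=
        (satisfiesPrekopaLeindler_of_isGaussian _).measure_rpow_mul_measure_rpow_le ha hb hab
          hTK.measurableSet hTL.measurableSet
    _ = μ (T ⁻¹' (T '' (a • K + b • L))) := by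
        rw [image_add, image_smul_set, image_smul_set,
          Measure.map_apply (by fun_prop) ((hTK.smul a).add (hTL.smul b)).measurableSet]

lemma half_smul_vadd_add_half_smul_neg_vadd_subset {E : Type*} [AddCommGroup E] [Module ℝ E]
    {C : Set E} (hC_conv : Convex ℝ C) (hC_symm : C = -C) (f : E) :
    (2⁻¹ : ℝ) • (f +ᵥ C) + (2⁻¹ : ℝ) • -(f +ᵥ C) ⊆ C := by
  rintro _ ⟨_, ⟨_, ⟨x, hx, rfl⟩, rfl⟩, _, ⟨z, ⟨y, hy, hyz⟩, rfl⟩, rfl⟩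
  obtain rfl : z = -(f + y) := neg_eq_iff_eq_neg.1 hyz.symm
  have h_neg_mem : -y ∈ C := hC_symm ▸ neg_mem_neg.2 hy
  have h_mid : (2⁻¹ : ℝ) • x + (2⁻¹ : ℝ) • -y ∈ C :=
    hC_conv hx h_neg_mem (by norm_num) (by norm_num) (by norm_num)
  have h_eq : (2⁻¹ : ℝ) • (f + x) + (2⁻¹ : ℝ) • -(f + y) = (2⁻¹ : ℝ) • x + (2⁻¹ : ℝ) • -y := by
    module
  rwa [← h_eq] at h_mid

theorem anderson_inequality_general {E : Type*} [AddCommGroup E] [Module ℝ E]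
    [TopologicalSpace E] [IsTopologicalAddGroup E] [ContinuousConstSMul ℝ E] [SeparatingDual ℝ E]
    [MeasurableSpace E] [BorelSpace E] (μ : Measure E) [μ.InnerRegularCompactLTTop]
    (hgauss : ∀ L : E →L[ℝ] ℝ, ∃ v : NNReal, μ.map L = gaussianReal 0 v)
    {C : Set E} (hC_meas : MeasurableSet C) (hC_conv : Convex ℝ C) (hC_symm : C = -C) (f : E) :
    μ (f +ᵥ C) ≤ μ C := by
  have : IsGaussian μ := isGaussian_of_map_eq_gaussianReal fun L ↦ ⟨0, hgauss L⟩
  have h_symm (L : E →L[ℝ] ℝ) : (μ.map L).IsNegInvariant := by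
    obtain ⟨v, hv⟩ := hgauss L
    exact hv ▸ isNegInvariant_gaussianReal_zero v
  rw [(hC_meas.const_vadd f).measure_eq_iSup_isCompact_of_ne_top (measure_ne_top _ _)]
  refine iSup₂_le fun K hKC ↦ iSup_le fun hK ↦ ?_
  calc μ K = μ K ^ (2⁻¹ : ℝ) * μ (-K) ^ (2⁻¹ : ℝ) := by
        rw [measure_neg_of_isCompact h_symm hK,
          ← ENNReal.rpow_add_of_nonneg _ _ (by norm_num) (by norm_num)]
        norm_num
    _ ≤ μ ((2⁻¹ : ℝ) • K + (2⁻¹ : ℝ) • -K) :=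
        measure_rpow_mul_measure_rpow_le_of_isGaussian μ (by norm_num) (by norm_num) (by norm_num)
          hK hK.neg
    _ ≤ μ ((2⁻¹ : ℝ) • (f +ᵥ C) + (2⁻¹ : ℝ) • -(f +ᵥ C)) := by
        gcongr
        exact neg_subset_neg.2 hKC
    _ ≤ μ C := measure_mono (half_smul_vadd_add_half_smul_neg_vadd_subset hC_conv hC_symm f)

end Anderson

/-- Anderson's inequality: if `μ` is a centered Gaussian measure on a
separable Banach space `E` (i.e. a probability measure whose image under every
continuous linear functional is a centered real Gaussian distribution), then for every
convex symmetric Borel set `C ⊆ E` and every `f ∈ E`, `μ(f + C) ≤ μ(C)`. -/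
theorem anderson_inequality
    {E : Type*} [NormedAddCommGroup E] [NormedSpace ℝ E] [CompleteSpace E]
    [TopologicalSpace.SeparableSpace E]
    [MeasurableSpace E] [BorelSpace E]
    (μ : Measure E) [IsProbabilityMeasure μ]
    (hgauss : ∀ L : E →L[ℝ] ℝ, ∃ v : NNReal, μ.map L = gaussianReal 0 v)
    (C : Set E) (hC_meas : MeasurableSet C) (hC_conv : Convex ℝ C)
    (hC_symm : C = -C) (f : E) :
    μ ((fun g => f + g) '' C) ≤ μ C := by
  have : SecondCountableTopology E := UniformSpace.secondCountable_of_separable E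
  exact anderson_inequality_general μ hgauss hC_meas hC_conv hC_symm f
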